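/- arXiv:1910.00916 — 3 statements merged into one kernel-verified Lean document; each statement's English description precedes it below -/
import Mathlib

section
/- Let M and N be positive integers, let S : Fin N → Finset (Fin M) assign to each job i a nonempty set S i of required workers, and let v : Fin N → ℝ assign nonnegative weights. Assume the jobs are indexed in sorted order, i.e., for all i ≤ j one has v j * Real.sqrt (card (S i)) ≤ v i * Real.sqrt (card (S j)) (equivalently v i / √(card (S i)) is nonincreasing in i). Let D₂ ⊆ Fin N be a greedy selection, meaning: (i) the sets S i for i ∈ D₂ are pairwise disjoint, and (ii) for every k ∉ D₂ there exists i ∈ D₂ with i < k and S i ∩ S k ≠ ∅. Then for every D₁ ⊆ Fin N whose sets S k, k ∈ D₁, are pairwise disjoint, one has ∑_{k ∈ D₁} v k ≤ Real.sqrt M * ∑_{i ∈ D₂} v i. (Lemma 3: the greedy approximate scheduling algorithm, which sorts jobs by weight divided by the square root of the number of required workers and selects each job whose workers are all still available, is a √M-approximation to the maximum-weight interference-free set of jobs.) -/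
/-!
Charge every job `k` of the competing selection to a selected job `i` that interferes with it and
has at least its weight per square root of the number of workers. The jobs charged to `i` are
pairwise disjoint and all meet `S i`, so there are at most `#(S i)` of them, and together they
require at most all workers. By Cauchy–Schwarz, `∑ √#(S k) ≤ √#(S i) * √M` over these jobs, hence
their total weight is at most `√M * v i`.
-/

open Finset

variable {ι α : Type*}

/-- Job `i` blocks job `k`: the two interfere, and `v k / √#(S k) ≤ v i / √#(S i)`. The comparison
is cross-multiplied, which loses nothing because interfering jobs have nonempty worker sets. A
greedy selection leaves out only jobs blocked by a selected one. -/
def Blocks (S : ι → Finset α) (v : ι → ℝ) (i k : ι) : Prop :=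
  ¬Disjoint (S i) (S k) ∧ v k * √(#(S i)) ≤ v i * √(#(S k))

theorem Blocks.refl {S : ι → Finset α} (v : ι → ℝ) {i : ι} (hi : (S i).Nonempty) :
    Blocks S v i i :=
  ⟨fun h => hi.ne_empty ((disjoint_self_iff_empty _).1 h), le_rfl⟩

theorem exists_blocks_of_greedy [Preorder ι] [DecidableEq α] {S : ι → Finset α} {v : ι → ℝ}
    {D : Finset ι} (hS : ∀ i ∈ D, (S i).Nonempty)
    (hsorted : ∀ i j, i ≤ j → v j * √(#(S i)) ≤ v i * √(#(S j)))
    (hgreedy : ∀ k ∉ D, ∃ i ∈ D, i < k ∧ (S i ∩ S k).Nonempty) (k : ι) :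
    ∃ i ∈ D, Blocks S v i k := by
  by_cases hk : k ∈ D
  · exact ⟨k, hk, .refl v (hS k hk)⟩
  · obtain ⟨i, hi, hik, hmeet⟩ := hgreedy k hk
    exact ⟨i, hi, not_disjoint_iff_nonempty_inter.2 hmeet, hsorted i k hik.le⟩

theorem card_le_card_of_pairwiseDisjoint_of_not_disjoint {S : ι → Finset α} {F : Finset ι}
    {T : Finset α} (hF : (F : Set ι).PairwiseDisjoint S) (hT : ∀ k ∈ F, ¬Disjoint T (S k)) :
    #F ≤ #T := by
  classical
  calc #F ≤ #(F.biUnion fun k => T ∩ S k) :=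
        card_le_card_biUnion (hF.mono fun _ => inter_subset_right)
          fun k hk => not_disjoint_iff_nonempty_inter.1 (hT k hk)
    _ ≤ #T := card_le_card (biUnion_subset.2 fun _ _ => inter_subset_left)

theorem sum_card_le_card_univ_of_pairwiseDisjoint [Fintype α] {S : ι → Finset α} {F : Finset ι}
    (hF : (F : Set ι).PairwiseDisjoint S) : ∑ k ∈ F, #(S k) ≤ Fintype.card α := by
  classical
  exact (card_biUnion hF).symm.trans_le (card_le_univ _)

theorem sum_sqrt_le_sqrt_card_mul_sqrt_sum (F : Finset ι) {a : ι → ℝ} (ha : ∀ k, 0 ≤ a k) :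
    ∑ k ∈ F, √(a k) ≤ √(#F) * √(∑ k ∈ F, a k) := by
  simpa using Real.sum_sqrt_mul_sqrt_le F (fun _ => zero_le_one) ha

theorem sum_sqrt_card_le_of_not_disjoint [Fintype α] {S : ι → Finset α} {F : Finset ι}
    {T : Finset α} (hF : (F : Set ι).PairwiseDisjoint S) (hT : ∀ k ∈ F, ¬Disjoint T (S k)) :
    ∑ k ∈ F, √(#(S k)) ≤ √(#T) * √(Fintype.card α) := by
  refine (sum_sqrt_le_sqrt_card_mul_sqrt_sum F fun k => Nat.cast_nonneg #(S k)).trans ?_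
  gcongr
  · exact card_le_card_of_pairwiseDisjoint_of_not_disjoint hF hT
  · exact_mod_cast sum_card_le_card_univ_of_pairwiseDisjoint hF

theorem sum_le_sqrt_card_mul_of_blocks [Fintype α] {S : ι → Finset α} {v : ι → ℝ}
    {F : Finset ι} {i : ι} (hF : (F : Set ι).PairwiseDisjoint S) (hi : 0 ≤ v i)
    (hblocks : ∀ k ∈ F, Blocks S v i k) :
    ∑ k ∈ F, v k ≤ √(Fintype.card α) * v i := by
  obtain rfl | ⟨k₀, hk₀⟩ := F.eq_empty_or_nonempty
  · simpa using mul_nonneg (Real.sqrt_nonneg _) hi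
  have hSi : (S i).Nonempty :=
    nonempty_iff_ne_empty.2 fun h => (hblocks k₀ hk₀).1 (h ▸ disjoint_empty_left _)
  have hpos : 0 < √(#(S i) : ℝ) := Real.sqrt_pos.2 (Nat.cast_pos.2 hSi.card_pos)
  refine le_of_mul_le_mul_right ?_ hpos
  calc (∑ k ∈ F, v k) * √(#(S i))
      = ∑ k ∈ F, v k * √(#(S i)) := sum_mul ..
    _ ≤ ∑ k ∈ F, v i * √(#(S k)) := sum_le_sum fun k hk => (hblocks k hk).2
    _ = v i * ∑ k ∈ F, √(#(S k)) := (mul_sum ..).symm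
    _ ≤ v i * (√(#(S i)) * √(Fintype.card α)) := by
        gcongr
        exact sum_sqrt_card_le_of_not_disjoint hF fun k hk => (hblocks k hk).1
    _ = √(Fintype.card α) * v i * √(#(S i)) := by ring

theorem stmt_0_general [Fintype α] {S : ι → Finset α} {v : ι → ℝ} {D₁ D₂ : Finset ι}
    (hv : ∀ i ∈ D₂, 0 ≤ v i) (hD₁ : (D₁ : Set ι).PairwiseDisjoint S)
    (hblocks : ∀ k ∈ D₁, ∃ i ∈ D₂, Blocks S v i k) :
    ∑ k ∈ D₁, v k ≤ √(Fintype.card α) * ∑ i ∈ D₂, v i := by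
  classical
  choose! blocker hmem hblocker using hblocks
  rw [← sum_fiberwise_of_maps_to hmem, mul_sum]
  refine sum_le_sum fun i hi => sum_le_sqrt_card_mul_of_blocks
    (hD₁.subset (coe_subset.2 (filter_subset _ _))) (hv i hi) fun k hk => ?_
  obtain ⟨hkD₁, rfl⟩ := mem_filter.1 hk
  exact hblocker k hkD₁

/-- Lemma 3: the greedy approximate scheduling algorithm (jobs sorted by
weight divided by the square root of the number of required workers, each job
selected if all its workers are still available) is a `√M`-approximation to the
maximum-weight interference-free set of jobs. -/
theorem stmt_0 (M N : ℕ) (hM : 0 < M) (hN : 0 < N)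
    (S : Fin N → Finset (Fin M)) (hS : ∀ i, (S i).Nonempty)
    (v : Fin N → ℝ) (hv : ∀ i, 0 ≤ v i)
    (hsorted : ∀ i j : Fin N, i ≤ j →
      v j * Real.sqrt ((S i).card) ≤ v i * Real.sqrt ((S j).card))
    (D₂ : Finset (Fin N))
    (hD₂disj : ∀ i ∈ D₂, ∀ j ∈ D₂, i ≠ j → Disjoint (S i) (S j))
    (hgreedy : ∀ k ∉ D₂, ∃ i ∈ D₂, i < k ∧ (S i ∩ S k).Nonempty)
    (D₁ : Finset (Fin N))
    (hD₁disj : ∀ i ∈ D₁, ∀ j ∈ D₁, i ≠ j → Disjoint (S i) (S j)) :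
    ∑ k ∈ D₁, v k ≤ Real.sqrt M * ∑ i ∈ D₂, v i := by
  simpa only [Fintype.card_fin] using stmt_0_general (fun i _ => hv i)
    (fun i hi j hj => hD₁disj i hi j hj)
    fun k _ => exists_blocks_of_greedy (fun i _ => hS i) hsorted hgreedy k
end

section
/- Let M be a positive integer, let S ⊆ Fin M be a nonempty finite set, and let v ≥ 0 be a real number. Let C be a finite index set (a Finset of some type ι), let T : ι → Finset (Fin M) be such that for every k ∈ C the set T k is nonempty and T k ∩ S ≠ ∅, and such that the sets T k, k ∈ C, are pairwise disjoint. Let w : ι → ℝ be nonnegative weights satisfying w k * Real.sqrt (card S) ≤ v * Real.sqrt (card (T k)) for every k ∈ C (i.e., w k / √(card (T k)) ≤ v / √(card S)). Then ∑_{k ∈ C} w k ≤ v * Real.sqrt M. (Per-job bound, Eq. (8) in the proof of Lemma 3: the total optimal weight attributable to jobs blocked by a single greedy job of weight v is at most v√M.) -/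
/-!
Each set `T k` meets `S` and the sets `T k` are disjoint, so there are at most `#S` of them.
By the Cauchy–Schwarz inequality, `∑ √#(T k) ≤ √#C * √(∑ #(T k)) ≤ √#S * √#(⋃ T k)`, and the
factor `√#S` cancels against the one in the hypothesis on the weights.
-/

section

open Finset

variable {ι α : Type*} [DecidableEq α] {C : Finset ι} {T : ι → Finset α} {S : Finset α}

theorem card_le_card_of_pairwiseDisjoint_of_inter_nonempty
    (hTS : ∀ k ∈ C, (T k ∩ S).Nonempty) (hdisj : (C : Set ι).PairwiseDisjoint T) : #C ≤ #S :=
  calc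
    #C ≤ #(C.biUnion fun k ↦ T k ∩ S) :=
      card_le_card_biUnion (hdisj.mono fun _ ↦ inter_subset_left) hTS
    _ ≤ #S := card_le_card (biUnion_subset.mpr fun _ _ ↦ inter_subset_right)

theorem sum_sqrt_card_le_sqrt_card_mul_sqrt_card_biUnion
    (hdisj : (C : Set ι).PairwiseDisjoint T) :
    ∑ k ∈ C, √(#(T k)) ≤ √(#C) * √(#(C.biUnion T)) := by
  rw [card_biUnion hdisj, Nat.cast_sum]
  simpa only [Real.sqrt_one, one_mul, sum_const, nsmul_one] using
    Real.sum_sqrt_mul_sqrt_le C (f := fun _ ↦ 1) (g := fun k ↦ (#(T k) : ℝ))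
      (fun _ ↦ zero_le_one) fun _ ↦ Nat.cast_nonneg _

theorem stmt_1_general {v : ℝ} (hv : 0 ≤ v) (hTS : ∀ k ∈ C, (T k ∩ S).Nonempty)
    (hdisj : (C : Set ι).PairwiseDisjoint T) {w : ι → ℝ}
    (hwk : ∀ k ∈ C, w k * √(#S) ≤ v * √(#(T k))) :
    ∑ k ∈ C, w k ≤ v * √(#(C.biUnion T)) := by
  obtain rfl | ⟨k, hk⟩ := C.eq_empty_or_nonempty
  · simp
  have hS : S.Nonempty := (hTS k hk).mono inter_subset_right
  have sqrt_card_pos : 0 < √(#S : ℝ) := Real.sqrt_pos.mpr (Nat.cast_pos.mpr hS.card_pos)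
  have card_le : #C ≤ #S := card_le_card_of_pairwiseDisjoint_of_inter_nonempty hTS hdisj
  refine le_of_mul_le_mul_right ?_ sqrt_card_pos
  calc
    (∑ k ∈ C, w k) * √(#S) = ∑ k ∈ C, w k * √(#S) := sum_mul ..
    _ ≤ ∑ k ∈ C, v * √(#(T k)) := sum_le_sum hwk
    _ = v * ∑ k ∈ C, √(#(T k)) := (mul_sum ..).symm
    _ ≤ v * (√(#C) * √(#(C.biUnion T))) := by
      gcongr
      exact sum_sqrt_card_le_sqrt_card_mul_sqrt_card_biUnion hdisj
    _ ≤ v * (√(#S) * √(#(C.biUnion T))) := by gcongr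
    _ = v * √(#(C.biUnion T)) * √(#S) := by ring

end

/-- Per-job bound, Eq. (8) in the proof of Lemma 3: the total optimal weight
attributable to jobs blocked by a single greedy job of weight `v` is at most
`v * √M`. -/
theorem stmt_1 {ι : Type*} (M : ℕ) (hM : 0 < M)
    (S : Finset (Fin M)) (hS : S.Nonempty) (v : ℝ) (hv : 0 ≤ v)
    (C : Finset ι) (T : ι → Finset (Fin M))
    (hT : ∀ k ∈ C, (T k).Nonempty)
    (hTS : ∀ k ∈ C, (T k ∩ S).Nonempty)
    (hdisj : ∀ k ∈ C, ∀ k' ∈ C, k ≠ k' → Disjoint (T k) (T k'))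
    (w : ι → ℝ) (hw : ∀ k ∈ C, 0 ≤ w k)
    (hwk : ∀ k ∈ C, w k * Real.sqrt S.card ≤ v * Real.sqrt ((T k).card)) :
    ∑ k ∈ C, w k ≤ v * Real.sqrt M :=
  (stmt_1_general hv hTS hdisj hwk).trans <| by
    gcongr; exact card_finset_fin_le _
end

section
/- Let c > 0 and let x : ℕ → ℝ satisfy x t ≥ 0 and x (t+1) ≥ x t − c for all t ≥ 1. Suppose there exists B ≥ 0 such that ∑_{t=1}^{T} x t ≤ B * T for every T ≥ 1 (bounded time averages). Then x T / T tends to 0 as T → ∞. (Intermediate claim in the sample-path argument for Proposition 2: if a nonnegative sequence can decrease by at most c per step and has bounded running averages, then it grows sublinearly.) -/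
/-!
A queue that holds `x T` at time `T` and loses at most `c` per step still holds at least
`x T - j * c` at time `T + j`, so the window `[T, T + k)` contributes at least
`k * x T - (k.choose 2) * c` to the total up to time `T + k`, which is at most `B * (T + k)`.
Taking `k` of order `√T` balances `k * c` against `B * T / k` and gives `x T = O(√T)`.
-/

section BoundedDecrease

variable {G : Type*} [AddCommGroup G] [PartialOrder G] [IsOrderedAddMonoid G]
  {f : ℕ → G} {c : G} {a : ℕ}

theorem sub_nsmul_le_of_sub_le_succ (hf : ∀ t ≥ a, f t - c ≤ f (t + 1)) (k : ℕ) :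
    f a - k • c ≤ f (a + k) := by
  induction k with
  | zero => simp
  | succ k ih =>
    calc f a - (k + 1) • c = f a - k • c - c := by rw [succ_nsmul, sub_sub]
      _ ≤ f (a + k) - c := sub_le_sub_right ih c
      _ ≤ f (a + (k + 1)) := hf (a + k) (Nat.le_add_right a k)

theorem nsmul_sub_choose_two_nsmul_le_sum_Ico (hf : ∀ t ≥ a, f t - c ≤ f (t + 1)) (k : ℕ) :
    k • f a - k.choose 2 • c ≤ ∑ t ∈ Finset.Ico a (a + k), f t := by
  induction k with
  | zero => simp
  | succ k ih =>
    calc (k + 1) • f a - (k + 1).choose 2 • c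
        = (k • f a - k.choose 2 • c) + (f a - k • c) := by
          rw [Nat.choose_succ_succ' k 1, Nat.choose_one_right, succ_nsmul, add_nsmul]
          abel
      _ ≤ ∑ t ∈ Finset.Ico a (a + k), f t + f (a + k) :=
          add_le_add ih (sub_nsmul_le_of_sub_le_succ hf k)
      _ = ∑ t ∈ Finset.Ico a (a + (k + 1)), f t :=
          (Finset.sum_Ico_succ_top (Nat.le_add_right a k) f).symm

theorem nsmul_le_choose_two_nsmul_add_sum_Icc (hf : ∀ t ≥ a, f t - c ≤ f (t + 1))
    (hf_nonneg : ∀ t ≥ a, 0 ≤ f t) {b : ℕ} (hab : a ≤ b) (k : ℕ) :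
    k • f b ≤ k.choose 2 • c + ∑ t ∈ Finset.Icc a (b + k), f t := by
  rw [← sub_le_iff_le_add']
  calc k • f b - k.choose 2 • c
      ≤ ∑ t ∈ Finset.Ico b (b + k), f t :=
        nsmul_sub_choose_two_nsmul_le_sum_Ico (fun t ht => hf t (hab.trans ht)) k
    _ ≤ ∑ t ∈ Finset.Icc a (b + k), f t :=
        Finset.sum_le_sum_of_subset_of_nonneg
          (Finset.Ico_subset_Icc_self.trans (Finset.Icc_subset_Icc_left hab))
          fun t ht _ => hf_nonneg t (Finset.mem_Icc.mp ht).1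

end BoundedDecrease

section BoundedAverages

open Asymptotics Filter

variable {c B : ℝ} {x : ℕ → ℝ}

theorem le_natSqrt_of_sum_Icc_le (hx : ∀ t ≥ 1, 0 ≤ x t)
    (hdec : ∀ t ≥ 1, x t - c ≤ x (t + 1)) (hB : 0 ≤ B) {T : ℕ} (hT : 1 ≤ T)
    (hsum : ∑ t ∈ Finset.Icc 1 (T + T.sqrt), x t ≤ B * (T + T.sqrt)) :
    x T ≤ c / 2 * (T.sqrt - 1) + B * (T.sqrt + 3) := by
  have natSqrt_pos : (0 : ℝ) < T.sqrt := mod_cast Nat.sqrt_pos.mpr hT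
  have le_natSqrt_sq_add : (T : ℝ) ≤ T.sqrt * T.sqrt + T.sqrt + T.sqrt :=
    mod_cast Nat.sqrt_le_add T
  refine le_of_mul_le_mul_left ?_ natSqrt_pos
  calc T.sqrt * x T
      ≤ T.sqrt.choose 2 * c + ∑ t ∈ Finset.Icc 1 (T + T.sqrt), x t := by
        simpa only [nsmul_eq_mul] using
          nsmul_le_choose_two_nsmul_add_sum_Icc hdec hx hT T.sqrt
    _ ≤ T.sqrt.choose 2 * c + B * (T + T.sqrt) := by gcongr
    _ ≤ T.sqrt.choose 2 * c + B * (T.sqrt * T.sqrt + T.sqrt + T.sqrt + T.sqrt) := by gcongr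
    _ = T.sqrt * (c / 2 * (T.sqrt - 1) + B * (T.sqrt + 3)) := by
        rw [Nat.cast_choose_two]
        ring

theorem stmt_5_general
    (hx : ∀ t ≥ 1, 0 ≤ x t) (hdec : ∀ t ≥ 1, x t - c ≤ x (t + 1))
    (havg : ∀ T ≥ 1, ∑ t ∈ Finset.Icc 1 T, x t ≤ B * T) :
    x =O[atTop] fun T : ℕ => √(T : ℝ) := by
  have hB : 0 ≤ B := (hx 1 le_rfl).trans (by simpa using havg 1 le_rfl)
  refine IsBigO.of_bound (|c| / 2 + 4 * B) ?_
  filter_upwards [eventually_ge_atTop 1] with T hT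
  have natSqrt_sub_one_nonneg : (0 : ℝ) ≤ T.sqrt - 1 :=
    sub_nonneg.mpr (mod_cast Nat.sqrt_pos.mpr hT)
  have natSqrt_le : (T.sqrt : ℝ) ≤ √(T : ℝ) := Real.nat_sqrt_le_real_sqrt
  rw [Real.norm_of_nonneg (hx T hT), Real.norm_of_nonneg (Real.sqrt_nonneg _)]
  calc x T
      ≤ c / 2 * (T.sqrt - 1) + B * (T.sqrt + 3) :=
        le_natSqrt_of_sum_Icc_le hx hdec hB hT
          (mod_cast havg (T + T.sqrt) (Nat.le_add_right_of_le hT))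
    _ ≤ |c| / 2 * √(T : ℝ) + B * (4 * √(T : ℝ)) := by
        gcongr
        · exact le_abs_self c
        · linarith
        · linarith
    _ = (|c| / 2 + 4 * B) * √(T : ℝ) := by ring

end BoundedAverages

theorem isLittleO_sqrt_id : Real.sqrt =o[Filter.atTop] (id : ℝ → ℝ) := by
  refine Asymptotics.isLittleO_of_tendsto (by simp) ?_
  simp only [id, Real.sqrt_div_self]
  exact Real.tendsto_sqrt_atTop.inv_tendsto_atTop

/-- Intermediate claim in the sample-path argument for Proposition 2: if a
nonnegative sequence can decrease by at most `c` per step and has bounded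
running averages, then it grows sublinearly. -/
theorem stmt_5 (c : ℝ) (hc : 0 < c) (x : ℕ → ℝ)
    (hx : ∀ t ≥ 1, 0 ≤ x t) (hdec : ∀ t ≥ 1, x (t + 1) ≥ x t - c)
    (B : ℝ) (hB : 0 ≤ B)
    (havg : ∀ T ≥ 1, ∑ t ∈ Finset.Icc 1 T, x t ≤ B * T) :
    Filter.Tendsto (fun T : ℕ => x T / T) Filter.atTop (nhds 0) := by
  have sqrt_isLittleO := isLittleO_sqrt_id.comp_tendsto (tendsto_natCast_atTop_atTop (R := ℝ))
  exact ((stmt_5_general hx hdec havg).trans_isLittleO sqrt_isLittleO).tendsto_div_nhds_zero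
end
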